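/- Assume (A1) r has all coordinates strictly positive and (A2) M_{ij} ≤ 0 for all i ≠ j, where M = XᵀX and r = Xᵀy. For s > 0, let μ(s) be the unique minimizer over {θ ≥ 0} of f(θ) + (1/s)⟨k, θ⟩ and I(s) = {i : μ_i(s) > 0}. The nondecreasing map s ↦ I(s) has finitely many points of discontinuity s₁,…,s_q ∈ (0,∞). For every s > 0 with s ∉ {s₁,…,s_q}, the solution θ^{(ε)} of the DLN ODE with initial condition θ_i^{(ε)}(0) = C_i ε^{k_i} satisfies θ^{(ε)}(s · log(1/ε)) → θ_*^{(I(s))} as ε → 0, where θ_*^{(I)} is the fixed point with support I given by (θ_*^{(I)})_I = (M_{II})⁻¹ r_I and (θ_*^{(I)})_i = 0 for i ∉ I. Moreover, the convergence is uniform for s in compact subsets of (0,∞) \ {s₁,…,s_q}. -/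

import Mathlib

open Matrix

/-- The principal submatrix `M_{II}` of `M` indexed by a subset `I`. -/
def subMat {d : ℕ} (M : Matrix (Fin d) (Fin d) ℝ) (I : Finset (Fin d)) :
    Matrix I I ℝ := fun a b => M a b

/-- The subvector `r_I` of `r` indexed by a subset `I`. -/
def subVec {d : ℕ} (r : Fin d → ℝ) (I : Finset (Fin d)) : I → ℝ :=
  fun a => r a

/-- The fixed point `θ_*^{(I)}` supported on `I`,
with `(θ_*^{(I)})_I = (M_{II})⁻¹ r_I` and zero outside `I`. -/
noncomputable def thetaStar {d : ℕ} (M : Matrix (Fin d) (Fin d) ℝ) (r : Fin d → ℝ)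
    (I : Finset (Fin d)) : Fin d → ℝ :=
  fun i => if h : i ∈ I then ((subMat M I)⁻¹ *ᵥ subVec r I) ⟨i, h⟩ else 0

/-!
In the slow time `s = t / L` with `L = log (1 / ε)`, put `u s = θ (L s)`. Dividing the ODE by `u`
and integrating gives `L⁻¹ log (u s / C) = s r - k - M A s` with `A s = ∫₀ˢ u`. As `u` is bounded,
each coordinate of the left side is either `O(1 / L)` or negative with `u` small, so `A s` solves,
up to `O(1 / L)`, the linear complementarity problem whose exact solution is `s μ(s)`. The Gram
matrix `M` is positive definite: the positive and negative parts of a kernel vector are again in the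
kernel, hence orthogonal to `r > 0`. Therefore `A s → s μ(s)` locally uniformly. Since `M` has
nonpositive off-diagonal entries, positivity of the residual `r - M u` is preserved, so `u` is
nondecreasing and `A` is convex. While the support of `μ` is constant, `s μ(s)` is affine with slope
`θ_*`, and convexity upgrades the convergence of `A` to that of its derivative `u`.
-/

open Filter Set Topology

/-! ### Matrices with nonpositive off-diagonal entries -/

lemma posPart_dotProduct_mulVec_posPart_le {R ι : Type*} [CommRing R] [LinearOrder R]
    [IsStrictOrderedRing R] [Fintype ι] {M : Matrix ι ι R} (hZ : ∀ i j, i ≠ j → M i j ≤ 0)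
    (v : ι → R) : v⁺ ⬝ᵥ (M *ᵥ v⁺) ≤ v⁺ ⬝ᵥ (M *ᵥ v) := by
  have hcross : v⁺ ⬝ᵥ (M *ᵥ v⁻) ≤ 0 := by
    simp only [dotProduct, mulVec, Finset.mul_sum, Pi.posPart_apply, Pi.negPart_apply]
    refine Finset.sum_nonpos fun i _ => Finset.sum_nonpos fun j _ => ?_
    rcases eq_or_ne i j with rfl | hij
    · rcases le_total 0 (v i) with h | h
      · simp [negPart_of_nonneg h]
      · simp [posPart_of_nonpos h]
    · exact mul_nonpos_of_nonneg_of_nonpos (posPart_nonneg _)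
        (mul_nonpos_of_nonpos_of_nonneg (hZ i j hij) (negPart_nonneg _))
  have hsplit : M *ᵥ v = M *ᵥ v⁺ - M *ᵥ v⁻ := by rw [← mulVec_sub, posPart_sub_negPart]
  rw [hsplit, dotProduct_sub]
  linarith

section Gram

variable {m ι : Type*} [Fintype m] {X : Matrix m ι ℝ} {y : m → ℝ}

lemma posPart_eq_zero_of_mulVec_eq_zero [Fintype ι] (hr : ∀ i, 0 < (Xᵀ *ᵥ y) i)
    (hZ : ∀ i j, i ≠ j → (Xᵀ * X) i j ≤ 0) {v : ι → ℝ} (hv : X *ᵥ v = 0) : v⁺ = 0 := by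
  have hXv : X *ᵥ v⁺ = 0 := by
    have h := posPart_dotProduct_mulVec_posPart_le hZ v
    rw [← mulVec_mulVec, ← mulVec_mulVec, hv, mulVec_zero, dotProduct_zero, dotProduct_mulVec,
      vecMul_transpose] at h
    exact dotProduct_self_eq_zero.mp (le_antisymm h (dotProduct_self_star_nonneg _))
  have hsum : ∑ i, (Xᵀ *ᵥ y) i * v⁺ i = 0 := by
    change (Xᵀ *ᵥ y) ⬝ᵥ v⁺ = 0
    rw [mulVec_transpose, ← dotProduct_mulVec, hXv, dotProduct_zero]
  have hnonneg : ∀ i ∈ Finset.univ, 0 ≤ (Xᵀ *ᵥ y) i * v⁺ i :=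
    fun i _ => mul_nonneg (hr i).le (posPart_nonneg (v i))
  rw [Finset.sum_eq_zero_iff_of_nonneg hnonneg] at hsum
  exact funext fun i => (mul_eq_zero.mp (hsum i (Finset.mem_univ i))).resolve_left (hr i).ne'

lemma posDef_transpose_mul_self_of_offDiag_nonpos [Finite ι]
    (hr : ∀ i, 0 < (Xᵀ *ᵥ y) i) (hZ : ∀ i j, i ≠ j → (Xᵀ * X) i j ≤ 0) : (Xᵀ * X).PosDef := by
  cases nonempty_fintype ι
  refine PosDef.conjTranspose_mul_self X <|
    (injective_iff_map_eq_zero X.mulVecLin).mpr fun v hv => ?_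
  rw [mulVecLin_apply] at hv
  rw [← posPart_sub_negPart v, ← posPart_neg, posPart_eq_zero_of_mulVec_eq_zero hr hZ hv,
    posPart_eq_zero_of_mulVec_eq_zero hr hZ (by rw [mulVec_neg, hv, neg_zero]), sub_zero]

end Gram

lemma mulVec_inv_mulVec {R ι : Type*} [CommRing R] [Fintype ι] [DecidableEq ι]
    {M : Matrix ι ι R} (hM : IsUnit M) (v : ι → R) : M *ᵥ (M⁻¹ *ᵥ v) = v := by
  rw [mulVec_mulVec, mul_nonsing_inv _ ((isUnit_iff_isUnit_det _).mp hM), one_mulVec]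

lemma inv_mulVec_mulVec {R ι : Type*} [CommRing R] [Fintype ι] [DecidableEq ι]
    {M : Matrix ι ι R} (hM : IsUnit M) (v : ι → R) : M⁻¹ *ᵥ (M *ᵥ v) = v := by
  rw [mulVec_mulVec, nonsing_inv_mul _ ((isUnit_iff_isUnit_det _).mp hM), one_mulVec]

section PosDef

variable {ι : Type*} [Fintype ι] {M : Matrix ι ι ℝ}

lemma eq_zero_of_dotProduct_mulVec_nonpos (hM : M.PosDef) {v : ι → ℝ}
    (hv : v ⬝ᵥ (M *ᵥ v) ≤ 0) : v = 0 := by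
  by_contra hne
  exact (hM.dotProduct_mulVec_pos hne).not_ge hv

lemma exists_pos_mul_sq_norm_le_dotProduct_mulVec (hM : M.PosDef) :
    ∃ c > 0, ∀ v : ι → ℝ, c * ‖v‖ ^ 2 ≤ v ⬝ᵥ (M *ᵥ v) := by
  have hcont : Continuous fun v : ι → ℝ => v ⬝ᵥ (M *ᵥ v) := by fun_prop
  obtain ⟨c, hc, hsphere⟩ := (isCompact_sphere (0 : ι → ℝ) 1).exists_forall_le'
    hcont.continuousOn fun v hv => hM.dotProduct_mulVec_pos (ne_zero_of_mem_unit_sphere ⟨v, hv⟩)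
  refine ⟨c, hc, fun v => ?_⟩
  rcases eq_or_ne v 0 with rfl | hv
  · simp
  have hnorm : 0 < ‖v‖ := norm_pos_iff.mpr hv
  have h := hsphere (‖v‖⁻¹ • v) (by simp [norm_smul, hnorm.ne'])
  rw [mulVec_smul, smul_dotProduct, dotProduct_smul, smul_eq_mul, smul_eq_mul] at h
  calc c * ‖v‖ ^ 2 ≤ ‖v‖⁻¹ * (‖v‖⁻¹ * (v ⬝ᵥ (M *ᵥ v))) * ‖v‖ ^ 2 := by gcongr
    _ = v ⬝ᵥ (M *ᵥ v) := by field_simp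

lemma le_of_mulVec_le_mulVec_of_lt (hM : M.PosDef) (hZ : ∀ i j, i ≠ j → M i j ≤ 0)
    {a b : ι → ℝ} (h : ∀ i, b i < a i → (M *ᵥ a) i ≤ (M *ᵥ b) i) : a ≤ b := by
  suffices (a - b)⁺ = 0 from sub_nonpos.mp (posPart_eq_zero.mp this)
  refine eq_zero_of_dotProduct_mulVec_nonpos hM <|
    (posPart_dotProduct_mulVec_posPart_le hZ _).trans <| Finset.sum_nonpos fun i _ => ?_
  rw [mulVec_sub, Pi.sub_apply, Pi.posPart_apply, Pi.sub_apply]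
  rcases le_or_gt (a i) (b i) with hi | hi
  · rw [posPart_of_nonpos (sub_nonpos.mpr hi), zero_mul]
  · exact mul_nonpos_of_nonneg_of_nonpos (posPart_nonneg _) (sub_nonpos.mpr (h i hi))

lemma le_inv_mulVec_of_mulVec_le [DecidableEq ι] (hM : M.PosDef)
    (hZ : ∀ i j, i ≠ j → M i j ≤ 0) {x q : ι → ℝ} (h : M *ᵥ x ≤ q) : x ≤ M⁻¹ *ᵥ q :=
  le_of_mulVec_le_mulVec_of_lt hM hZ fun i _ => by
    rw [mulVec_inv_mulVec hM.isUnit]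
    exact h i

end PosDef

/-! ### Linear complementarity problems -/

lemma nonneg_of_forall_quadratic_nonneg {b c : ℝ}
    (h : ∀ t ∈ Ioc (0 : ℝ) 1, 0 ≤ t * b + t ^ 2 * c) : 0 ≤ b := by
  have hlim : Tendsto (fun t : ℝ => b + t * c) (𝓝[>] 0) (𝓝 b) := by
    have hcont : Continuous fun t : ℝ => b + t * c := by fun_prop
    simpa using (hcont.tendsto 0).mono_left nhdsWithin_le_nhds
  refine ge_of_tendsto hlim ?_
  filter_upwards [Ioc_mem_nhdsGT zero_lt_one] with t ht
  refine nonneg_of_mul_nonneg_right (a := t) ?_ ht.1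
  linarith [h t ht]

/-- `a` solves the linear complementarity problem `0 ≤ a ⟂ M a - q ≥ 0`, which are the
Karush–Kuhn–Tucker conditions for minimizing `θ ↦ ½⟨θ, Mθ⟩ - ⟨q, θ⟩` over `θ ≥ 0`. -/
structure IsLCPSolution {ι : Type*} [Fintype ι] (M : Matrix ι ι ℝ) (q a : ι → ℝ) : Prop where
  nonneg : 0 ≤ a
  le_mulVec : q ≤ M *ᵥ a
  mul_eq_zero : ∀ i, a i * (q i - (M *ᵥ a) i) = 0

namespace IsLCPSolution

variable {ι : Type*} [Fintype ι] {M : Matrix ι ι ℝ} {q a : ι → ℝ}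

lemma nonneg_of_isMinOn (hM : M.IsSymm) (ha : 0 ≤ a)
    (hmin : IsMinOn (fun θ => 1 / 2 * (θ ⬝ᵥ (M *ᵥ θ)) - q ⬝ᵥ θ) (Ici 0) a)
    {v : ι → ℝ} (hv : 0 ≤ a + v) : 0 ≤ v ⬝ᵥ (M *ᵥ a - q) := by
  refine nonneg_of_forall_quadratic_nonneg (c := 1 / 2 * (v ⬝ᵥ (M *ᵥ v))) fun t ht => ?_
  have hmem : 0 ≤ a + t • v := fun i => by
    have h1 := mul_nonneg ht.1.le (hv i)
    have h2 := mul_nonneg (sub_nonneg.mpr ht.2) (ha i)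
    simp only [Pi.add_apply, Pi.smul_apply, smul_eq_mul, Pi.zero_apply] at h1 h2 ⊢
    linarith
  have hcross : a ⬝ᵥ (M *ᵥ v) = v ⬝ᵥ (M *ᵥ a) := by
    rw [dotProduct_mulVec, ← mulVec_transpose, hM.eq, dotProduct_comm]
  have hle := hmin hmem
  simp only [mem_ofPred_eq, mulVec_add, mulVec_smul, add_dotProduct, dotProduct_add,
    smul_dotProduct, dotProduct_smul, smul_eq_mul, hcross] at hle
  rw [dotProduct_sub, dotProduct_comm v q]
  linarith

lemma of_isMinOn (hM : M.IsSymm) (ha : 0 ≤ a)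
    (hmin : IsMinOn (fun θ => 1 / 2 * (θ ⬝ᵥ (M *ᵥ θ)) - q ⬝ᵥ θ) (Ici 0) a) :
    IsLCPSolution M q a := by
  classical
  have hgrad : ∀ i, 0 ≤ (M *ᵥ a) i - q i := fun i => by
    have hadd : 0 ≤ a + Pi.single i 1 := add_nonneg ha (Pi.single_nonneg.mpr zero_le_one)
    simpa using nonneg_of_isMinOn hM ha hmin hadd
  have hcompl : ∀ i, a i * ((M *ᵥ a) i - q i) ≤ 0 := fun i => by
    have herase : 0 ≤ a + Pi.single i (-a i) := fun j => by
      rcases eq_or_ne j i with rfl | hj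
      · simp
      · simpa [hj] using ha j
    simpa [mul_sub] using nonneg_of_isMinOn hM ha hmin herase
  refine ⟨ha, fun i => sub_nonneg.mp (hgrad i), fun i => ?_⟩
  have := mul_nonneg (ha i) (hgrad i)
  linarith [hcompl i]

lemma of_forall_regularized_le (hM : M.IsSymm) {r k : ι → ℝ} {f : (ι → ℝ) → ℝ} {c s : ℝ}
    (hf : ∀ θ, f θ = c - ∑ i, r i * θ i + 1 / 2 * ∑ i, θ i * (M *ᵥ θ) i) (ha : ∀ i, 0 ≤ a i)
    (hmin : ∀ θ, (∀ i, 0 ≤ θ i) →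
      f a + 1 / s * ∑ i, k i * a i ≤ f θ + 1 / s * ∑ i, k i * θ i) :
    IsLCPSolution M (r - s⁻¹ • k) a := by
  refine of_isMinOn hM ha fun θ hθ => ?_
  have hle := hmin θ hθ
  simp only [hf, one_div] at hle
  simp only [mem_ofPred_eq, sub_dotProduct, smul_dotProduct, smul_eq_mul, one_div]
  change _ * ∑ _, _ - (∑ _, _ - _ * ∑ _, _) ≤ _ * ∑ _, _ - (∑ _, _ - _ * ∑ _, _)
  linarith

lemma smul (h : IsLCPSolution M q a) {s : ℝ} (hs : 0 ≤ s) :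
    IsLCPSolution M (s • q) (s • a) where
  nonneg := smul_nonneg hs h.nonneg
  le_mulVec := by
    rw [mulVec_smul]
    exact smul_le_smul_of_nonneg_left h.le_mulVec hs
  mul_eq_zero i := by
    simp only [mulVec_smul, Pi.smul_apply, smul_eq_mul]
    linear_combination s ^ 2 * h.mul_eq_zero i

lemma smul_of_sub_inv_smul {r k : ι → ℝ} {s : ℝ} (h : IsLCPSolution M (r - s⁻¹ • k) a)
    (hs : 0 < s) : IsLCPSolution M (s • r - k) (s • a) := by
  simpa [smul_sub, smul_smul, hs.ne'] using h.smul hs.le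

lemma mulVec_eq_of_pos (h : IsLCPSolution M q a) {i : ι} (hi : 0 < a i) : (M *ᵥ a) i = q i :=
  (sub_eq_zero.mp ((_root_.mul_eq_zero.mp (h.mul_eq_zero i)).resolve_left hi.ne')).symm

lemma le_of_feasible (h : IsLCPSolution M q a) (hM : M.PosDef)
    (hZ : ∀ i j, i ≠ j → M i j ≤ 0) {b : ι → ℝ} (hb : 0 ≤ b) (hqb : q ≤ M *ᵥ b) : a ≤ b :=
  le_of_mulVec_le_mulVec_of_lt hM hZ fun i hi => by
    rw [h.mulVec_eq_of_pos ((hb i).trans_lt hi)]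
    exact hqb i

lemma dotProduct_mulVec_sub_le (h : IsLCPSolution M q a) {b : ι → ℝ} (hb : 0 ≤ b) :
    (b - a) ⬝ᵥ (M *ᵥ (b - a)) ≤ (a - b) ⬝ᵥ (q - M *ᵥ b) := by
  refine Finset.sum_le_sum fun i _ => ?_
  simp only [mulVec_sub, Pi.sub_apply]
  have hqa : b i * (q i - (M *ᵥ a) i) ≤ 0 :=
    mul_nonpos_of_nonneg_of_nonpos (hb i) (sub_nonpos.mpr (h.le_mulVec i))
  linarith [h.mul_eq_zero i]

end IsLCPSolution

/-! ### Times at which the support changes -/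

section Support

lemma frontier_subsingleton_of_isUpperSet {α : Type*} [LinearOrder α] [TopologicalSpace α]
    [OrderTopology α] {U : Set α} (hU : IsUpperSet U) : (frontier U).Subsingleton := by
  have hlt : ∀ x ∈ frontier U, ∀ z ∈ frontier U, ¬ x < z := fun x hx z hz hxz => by
    obtain ⟨w, hwz, hwU⟩ := mem_closure_iff.mp hx.1 (Iio z) isOpen_Iio hxz
    exact hz.2 <| mem_interior.mpr ⟨Ioi w, fun _ hw => hU (le_of_lt hw) hwU, isOpen_Ioi, hwz⟩
  exact fun x hx z hz => le_antisymm (not_lt.mp (hlt z hz x hx)) (not_lt.mp (hlt x hx z hz))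

lemma eventually_mem_iff_of_notMem_frontier {α : Type*} [TopologicalSpace α] {U : Set α} {x : α}
    (hx : x ∉ frontier U) : ∀ᶠ z in 𝓝 x, (z ∈ U ↔ x ∈ U) := by
  by_cases hxU : x ∈ U
  · have hint : x ∈ interior U := by_contra fun h => hx ⟨subset_closure hxU, h⟩
    filter_upwards [mem_interior_iff_mem_nhds.mp hint] with z hz
    exact iff_of_true hz hxU
  · have hcl : x ∉ closure U := fun h => hx ⟨h, fun h' => hxU (interior_subset h')⟩
    filter_upwards [isClosed_closure.isOpen_compl.mem_nhds hcl] with z hz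
    exact iff_of_false (fun h => hz (subset_closure h)) hxU

/-- The positive times at which the support of `μ` changes: the discontinuities `s₁, …, s_q` of
`s ↦ I(s)`. -/
def switchTimes {ι : Type*} (μ : ℝ → ι → ℝ) : Set ℝ :=
  Ioi 0 ∩ ⋃ i, frontier {s | 0 < s ∧ 0 < μ s i}

variable {ι : Type*} [Finite ι] {μ : ℝ → ι → ℝ}

lemma finite_switchTimes (hμ : ∀ i, IsUpperSet {s | 0 < s ∧ 0 < μ s i}) :
    (switchTimes μ).Finite :=
  (finite_iUnion fun i => (frontier_subsingleton_of_isUpperSet (hμ i)).finite).inter_of_right _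

lemma eventually_pos_iff_of_notMem_switchTimes {s : ℝ} (hs : 0 < s) (hsμ : s ∉ switchTimes μ) :
    ∀ᶠ t in 𝓝 s, 0 < t ∧ ∀ i, 0 < μ t i ↔ 0 < μ s i := by
  have hfrontier : ∀ i, s ∉ frontier {s | 0 < s ∧ 0 < μ s i} :=
    fun i hi => hsμ ⟨hs, mem_iUnion.mpr ⟨i, hi⟩⟩
  filter_upwards [lt_mem_nhds hs,
    eventually_all.mpr fun i => eventually_mem_iff_of_notMem_frontier (hfrontier i)] with t ht hiff
  exact ⟨ht, fun i => by simpa only [mem_ofPred_eq, ht, hs, true_and] using hiff i⟩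

end Support

/-! ### The dynamics in slow time -/

section Positivity

variable {ι : Type*}

lemma pos_of_neg_mul_le_deriv {φ φ' : ℝ → ℝ} {a b c : ℝ} (hab : a ≤ b)
    (hφ : ∀ t ∈ Icc a b, HasDerivAt φ (φ' t) t) (hφ' : ∀ t ∈ Ioo a b, -(c * φ t) ≤ φ' t)
    (ha : 0 < φ a) : 0 < φ b := by
  have hderiv : ∀ t ∈ Icc a b, HasDerivAt (fun t => φ t * Real.exp (c * t))
      ((φ' t + c * φ t) * Real.exp (c * t)) t := fun t ht => by
    have hexp : HasDerivAt (fun t => Real.exp (c * t)) (Real.exp (c * t) * c) t := by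
      simpa using ((hasDerivAt_id t).const_mul c).exp
    exact ((hφ t ht).fun_mul hexp).congr_deriv (by ring)
  have hmono : MonotoneOn (fun t => φ t * Real.exp (c * t)) (Icc a b) := by
    refine monotoneOn_of_hasDerivWithinAt_nonneg (convex_Icc a b)
      (fun t ht => (hderiv t ht).continuousAt.continuousWithinAt)
      (fun t ht => (hderiv t (interior_subset ht)).hasDerivWithinAt) fun t ht => ?_
    rw [interior_Icc] at ht
    exact mul_nonneg (by linarith [hφ' t ht]) (Real.exp_pos _).le
  have hle := hmono (left_mem_Icc.mpr hab) (right_mem_Icc.mpr hab) hab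
  exact pos_of_mul_pos_left ((mul_pos ha (Real.exp_pos _)).trans_le hle) (Real.exp_pos _).le

lemma exists_isLeast_nonpos_of_continuousOn [Finite ι] {g : ℝ → ι → ℝ} {T : ℝ} {i : ι}
    (hT : 0 ≤ T) (hg : ContinuousOn g (Icc 0 T)) (hi : g T i ≤ 0) :
    ∃ τ, IsLeast {t ∈ Icc 0 T | ∃ j, g t j ≤ 0} τ := by
  refine IsCompact.exists_isLeast ?_ ⟨T, right_mem_Icc.mpr hT, i, hi⟩
  have hclosed : IsClosed {v : ι → ℝ | ∃ j, v j ≤ 0} := by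
    simp only [ofPred_exists]
    exact isClosed_iUnion_of_finite fun j =>
      isClosed_le (continuous_apply j) continuous_const
  exact isCompact_Icc.of_isClosed_subset
    (hg.preimage_isClosed_of_isClosed isClosed_Icc hclosed) fun _ ht => ht.1

variable [Fintype ι]

lemma pos_of_hasDerivAt_mulVec_of_offDiag_nonneg {g : ℝ → ι → ℝ} {B : ℝ → Matrix ι ι ℝ}
    (hg : ∀ t ≥ 0, HasDerivAt g (B t *ᵥ g t) t) (hB : ∀ t ≥ 0, ∀ i j, i ≠ j → 0 ≤ B t i j)
    (hdiag : ∀ i, ContinuousOn (fun t => B t i i) (Ici 0)) (h0 : ∀ i, 0 < g 0 i)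
    {t : ℝ} (ht : 0 ≤ t) (i : ι) : 0 < g t i := by
  by_contra! hneg
  -- Before the first time `τ` at which a coordinate is nonpositive, the off-diagonal terms can only
  -- increase `g · j`, which therefore decays at most exponentially.
  obtain ⟨τ, ⟨hτ, j, hj⟩, hleast⟩ := exists_isLeast_nonpos_of_continuousOn ht
    (fun s hs => (hg s hs.1).continuousAt.continuousWithinAt) hneg
  have hbefore : ∀ s ∈ Ioo 0 τ, ∀ l, 0 < g s l := fun s hs l => by
    by_contra! hl
    exact hs.2.not_ge (hleast ⟨⟨hs.1.le, hs.2.le.trans hτ.2⟩, l, hl⟩)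
  obtain ⟨c, hc⟩ := isCompact_Icc.exists_bound_of_continuousOn
    ((hdiag j).mono (Icc_subset_Ici_self : Icc 0 τ ⊆ Ici 0))
  refine hj.not_gt <| pos_of_neg_mul_le_deriv (c := c) hτ.1
    (fun s hs => hasDerivAt_pi.mp (hg s hs.1) j) (fun s hs => ?_) (h0 j)
  have hBjj : -c ≤ B s j j := neg_le_of_abs_le (hc s (Ioo_subset_Icc_self hs))
  calc -(c * g s j) = -c * g s j := by ring
    _ ≤ B s j j * g s j := by gcongr; exact (hbefore s hs j).le
    _ ≤ (B s *ᵥ g s) j := by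
      classical
      rw [mulVec, dotProduct, ← Finset.add_sum_erase _ _ (Finset.mem_univ j)]
      refine le_add_of_nonneg_right <| Finset.sum_nonneg fun l hl => ?_
      exact mul_nonneg (hB s hs.1.le j l (Finset.ne_of_mem_erase hl).symm) (hbefore s hs l).le

lemma hasDerivAt_mulVec {ι' : Type*} [Finite ι'] (M : Matrix ι' ι ℝ) {g : ℝ → ι → ℝ} {g' : ι → ℝ}
    {t : ℝ} (hg : HasDerivAt g g' t) : HasDerivAt (fun τ => M *ᵥ g τ) (M *ᵥ g') t := by
  cases nonempty_fintype ι'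
  exact M.mulVecLin.toContinuousLinearMap.hasFDerivAt.comp_hasDerivAt t hg

end Positivity

/-- The diagonal linear network ODE `θ' = θ (r - M θ)` with initial condition `C ε ^ k`, written
in the slow time `u s = θ (L s)` with `L = log (1 / ε)`, so that `ε ^ k = exp (-L k)`. -/
structure IsSlowDLN {ι : Type*} [Fintype ι] (M : Matrix ι ι ℝ) (r k C : ι → ℝ) (L : ℝ)
    (u : ℝ → ι → ℝ) : Prop where
  apply_zero : ∀ i, u 0 i = C i * Real.exp (-(L * k i))
  hasDerivAt : ∀ s ≥ 0, HasDerivAt u (L • (u s * (r - M *ᵥ u s))) s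

/-- The growth exponents `L⁻¹ log (u s / C)` of the coordinates up to slow time `s`. -/
noncomputable def growthRate {ι : Type*} (C : ι → ℝ) (L : ℝ) (u : ℝ → ι → ℝ) (s : ℝ) (i : ι) : ℝ :=
  Real.log (u s i / C i) / L

/-- The integral of `u` over `[0, s]` for a solution `u` of `IsSlowDLN`, obtained without
integrating from the identity `growthRate s = s • r - k - M ∫₀ˢ u`. -/
noncomputable def slowIntegral {ι : Type*} [Fintype ι] [DecidableEq ι] (M : Matrix ι ι ℝ)
    (r k C : ι → ℝ) (L : ℝ) (u : ℝ → ι → ℝ) (s : ℝ) : ι → ℝ :=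
  M⁻¹ *ᵥ (s • r - k - growthRate C L u s)

namespace IsSlowDLN

variable {ι : Type*} [Fintype ι] {M : Matrix ι ι ℝ} {r k C : ι → ℝ} {L : ℝ} {u : ℝ → ι → ℝ}
  {s : ℝ}

lemma of_hasDerivAt {ε : ℝ} {θ : ℝ → ι → ℝ} (hε : ε ∈ Ioc 0 1)
    (hinit : ∀ i, θ 0 i = C i * ε ^ k i)
    (hode : ∀ t ≥ 0, ∀ i, HasDerivAt (fun τ => θ τ i) (θ t i * (r i - (M *ᵥ θ t) i)) t) :
    IsSlowDLN M r k C (Real.log (1 / ε)) fun s => θ (s * Real.log (1 / ε)) where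
  apply_zero i := by
    rw [zero_mul, hinit, Real.rpow_def_of_pos hε.1, one_div, Real.log_inv, neg_mul, neg_neg]
  hasDerivAt s hs := by
    have hL : 0 ≤ Real.log (1 / ε) := Real.log_nonneg (one_le_one_div hε.1 hε.2)
    refine hasDerivAt_pi.mpr fun i => ?_
    refine ((hode _ (mul_nonneg hs hL) i).comp s (hasDerivAt_mul_const _)).congr_deriv ?_
    simp [mul_comm]

lemma continuousOn (h : IsSlowDLN M r k C L u) : ContinuousOn u (Ici 0) :=
  fun s hs => (h.hasDerivAt s hs).continuousAt.continuousWithinAt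

lemma pos (h : IsSlowDLN M r k C L u) (hC : ∀ i, 0 < C i) (hs : 0 ≤ s) (i : ι) :
    0 < u s i := by
  classical
  refine pos_of_hasDerivAt_mulVec_of_offDiag_nonneg
    (B := fun t => diagonal (L • (r - M *ᵥ u t))) (fun t ht => ?_) (fun t _ i j hij => ?_)
    (fun i => ?_) (fun i => ?_) hs i
  · refine (h.hasDerivAt t ht).congr_deriv <| funext fun i => ?_
    simp only [mulVec_diagonal, Pi.smul_apply, Pi.mul_apply, smul_eq_mul]
    ring
  · exact (diagonal_apply_ne _ hij).ge
  · simp only [diagonal_apply_eq]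
    have := h.continuousOn
    fun_prop
  · rw [h.apply_zero]
    exact mul_pos (hC i) (Real.exp_pos _)

lemma mulVec_lt (h : IsSlowDLN M r k C L u) (hC : ∀ i, 0 < C i) (hL : 0 ≤ L)
    (hZ : ∀ i j, i ≠ j → M i j ≤ 0) (h0 : ∀ i, (M *ᵥ u 0) i < r i) (hs : 0 ≤ s) (i : ι) :
    (M *ᵥ u s) i < r i := by
  refine sub_pos.mp <| pos_of_hasDerivAt_mulVec_of_offDiag_nonneg (g := fun t => r - M *ᵥ u t)
    (B := fun t => of fun i j => -(M i j * (L * u t j))) (fun t ht => ?_)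
    (fun t ht i j hij => ?_) (fun i => ?_) (fun i => sub_pos.mpr (h0 i)) hs i
  · refine ((hasDerivAt_mulVec M (h.hasDerivAt t ht)).const_sub r).congr_deriv <|
      funext fun i => ?_
    simp only [mulVec, dotProduct, of_apply, Pi.neg_apply, Pi.smul_apply, Pi.mul_apply,
      Pi.sub_apply, smul_eq_mul, ← Finset.sum_neg_distrib]
    exact Finset.sum_congr rfl fun j _ => by ring
  · exact neg_nonneg.mpr <| mul_nonpos_of_nonpos_of_nonneg (hZ i j hij)
      (mul_nonneg hL (h.pos hC ht j).le)
  · have := h.continuousOn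
    simp only [of_apply]
    fun_prop

lemma monotoneOn (h : IsSlowDLN M r k C L u) (hC : ∀ i, 0 < C i) (hL : 0 ≤ L)
    (hZ : ∀ i j, i ≠ j → M i j ≤ 0) (h0 : ∀ i, (M *ᵥ u 0) i < r i) (i : ι) :
    MonotoneOn (fun t => u t i) (Ici 0) := by
  refine monotoneOn_of_hasDerivWithinAt_nonneg (convex_Ici 0)
    (fun t ht => (hasDerivAt_pi.mp (h.hasDerivAt t ht) i).continuousAt.continuousWithinAt)
    (fun t ht => (hasDerivAt_pi.mp (h.hasDerivAt t (interior_subset ht)) i).hasDerivWithinAt)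
    fun t ht => ?_
  replace ht : 0 ≤ t := interior_subset ht
  exact mul_nonneg hL <|
    mul_nonneg (h.pos hC ht i).le (sub_nonneg.mpr (h.mulVec_lt hC hL hZ h0 ht i).le)

lemma growthRate_zero (h : IsSlowDLN M r k C L u) (hC : ∀ i, 0 < C i) (hL : L ≠ 0) :
    growthRate C L u 0 = -k := by
  ext i
  rw [growthRate, h.apply_zero, mul_div_cancel_left₀ _ (hC i).ne', Real.log_exp, neg_div,
    mul_div_cancel_left₀ _ hL, Pi.neg_apply]

lemma hasDerivAt_growthRate (h : IsSlowDLN M r k C L u) (hC : ∀ i, 0 < C i) (hL : L ≠ 0)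
    (hs : 0 ≤ s) : HasDerivAt (growthRate C L u) (r - M *ᵥ u s) s := by
  refine hasDerivAt_pi.mpr fun i => ?_
  have hu := (h.pos hC hs i).ne'
  have hCi := (hC i).ne'
  refine ((((hasDerivAt_pi.mp (h.hasDerivAt s hs) i).div_const (C i)).log
    (div_ne_zero hu hCi)).div_const L).congr_deriv ?_
  simp only [Pi.smul_apply, Pi.mul_apply, smul_eq_mul]
  field_simp

variable [DecidableEq ι]

lemma hasDerivAt_slowIntegral (h : IsSlowDLN M r k C L u) (hM : IsUnit M)
    (hC : ∀ i, 0 < C i) (hL : L ≠ 0) (hs : 0 ≤ s) (i : ι) :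
    HasDerivAt (fun t => slowIntegral M r k C L u t i) (u s i) s := by
  have hlin : HasDerivAt (fun t : ℝ => t • r - k) r s := by
    simpa using ((hasDerivAt_id s).smul_const r).sub_const k
  have hinv := hasDerivAt_mulVec M⁻¹ (hlin.fun_sub (h.hasDerivAt_growthRate hC hL hs))
  rw [sub_sub_cancel, inv_mulVec_mulVec hM] at hinv
  exact hasDerivAt_pi.mp hinv i

lemma slowIntegral_zero (h : IsSlowDLN M r k C L u) (hC : ∀ i, 0 < C i) (hL : L ≠ 0) :
    slowIntegral M r k C L u 0 = 0 := by
  rw [slowIntegral, h.growthRate_zero hC hL]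
  simp

lemma convexOn_slowIntegral (h : IsSlowDLN M r k C L u) (hM : M.PosDef) (hC : ∀ i, 0 < C i)
    (hL : 0 < L) (hZ : ∀ i j, i ≠ j → M i j ≤ 0) (h0 : ∀ i, (M *ᵥ u 0) i < r i) (i : ι) :
    ConvexOn ℝ (Ici 0) (fun t => slowIntegral M r k C L u t i) := by
  have hderiv : ∀ t ∈ Ici (0 : ℝ), HasDerivAt (fun t => slowIntegral M r k C L u t i) (u t i) t :=
    fun t ht => h.hasDerivAt_slowIntegral hM.isUnit hC hL.ne' ht i
  refine MonotoneOn.convexOn_of_deriv (convex_Ici 0)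
    (fun t ht => (hderiv t ht).continuousAt.continuousWithinAt)
    (fun t ht => (hderiv t (interior_subset ht)).differentiableAt.differentiableWithinAt) ?_
  exact ((h.monotoneOn hC hL.le hZ h0 i).mono interior_subset).congr
    fun t ht => (hderiv t (interior_subset ht)).deriv.symm

lemma slowIntegral_mem_Icc (h : IsSlowDLN M r k C L u) (hM : M.PosDef) (hC : ∀ i, 0 < C i)
    (hL : 0 < L) (hZ : ∀ i j, i ≠ j → M i j ≤ 0) (h0 : ∀ i, (M *ᵥ u 0) i < r i) (hs : 0 < s)
    (i : ι) : slowIntegral M r k C L u s i ∈ Icc 0 (s * u s i) := by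
  have hconv := h.convexOn_slowIntegral hM hC hL hZ h0 i
  have hderiv : ∀ t ∈ Ici (0 : ℝ), HasDerivAt (fun t => slowIntegral M r k C L u t i) (u t i) t :=
    fun t ht => h.hasDerivAt_slowIntegral hM.isUnit hC hL.ne' ht i
  have hzero : slowIntegral M r k C L u 0 i = 0 := congrFun (h.slowIntegral_zero hC hL.ne') i
  have hlower := hconv.le_slope_of_hasDerivAt self_mem_Ici hs.le hs (hderiv 0 self_mem_Ici)
  have hupper := hconv.slope_le_of_hasDerivAt self_mem_Ici hs.le hs (hderiv s hs.le)
  rw [slope_def_field, hzero, sub_zero, sub_zero] at hlower hupper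
  have hmean : 0 < slowIntegral M r k C L u s i / s := (h.pos hC le_rfl i).trans_le hlower
  exact ⟨((div_pos_iff_of_pos_right hs).mp hmean).le, (div_le_iff₀' hs).mp hupper⟩

lemma growthRate_le (h : IsSlowDLN M r k C L u) (hM : M.PosDef) (hC : ∀ i, 0 < C i)
    (hL : 0 < L) (hZ : ∀ i j, i ≠ j → M i j ≤ 0) (h0 : ∀ i, (M *ᵥ u 0) i < r i) (hs : 0 ≤ s)
    (i : ι) : growthRate C L u s i ≤ (M⁻¹ *ᵥ r) i / C i / L := by
  have hle : u s i ≤ (M⁻¹ *ᵥ r) i :=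
    le_inv_mulVec_of_mulVec_le hM hZ (fun j => (h.mulVec_lt hC hL.le hZ h0 hs j).le) i
  have hCi := (hC i).le
  rw [growthRate]
  gcongr
  calc Real.log (u s i / C i) ≤ u s i / C i := Real.log_le_self (div_nonneg (h.pos hC hs i).le hCi)
    _ ≤ (M⁻¹ *ᵥ r) i / C i := by gcongr

lemma neg_slowIntegral_mul_growthRate_le (h : IsSlowDLN M r k C L u) (hM : M.PosDef)
    (hC : ∀ i, 0 < C i) (hL : 0 < L) (hZ : ∀ i j, i ≠ j → M i j ≤ 0)
    (h0 : ∀ i, (M *ᵥ u 0) i < r i) (hs : 0 < s) (i : ι) :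
    -(slowIntegral M r k C L u s i * growthRate C L u s i) ≤ s * C i / L := by
  obtain ⟨hA0, hAu⟩ := h.slowIntegral_mem_Icc hM hC hL hZ h0 hs i
  set A := slowIntegral M r k C L u s i
  set x := u s i / C i with hx
  have hux : u s i = C i * x := (mul_div_cancel₀ _ (hC i).ne').symm
  have hx0 : 0 < x := div_pos (h.pos hC hs.le i) (hC i)
  have hCi := hC i
  have hlog : -(A * Real.log x) ≤ s * C i := by
    rcases le_total 0 (Real.log x) with hpos | hneg
    · exact (neg_nonpos.mpr (mul_nonneg hA0 hpos)).trans (by positivity)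
    · calc -(A * Real.log x) = A * -Real.log x := by ring
        _ ≤ s * u s i * -Real.log x := by gcongr; linarith
        _ = s * C i * -(x * Real.log x) := by rw [hux]; ring
        _ ≤ s * C i * 1 := by gcongr; linarith [Real.self_sub_one_le_mul_log hx0.le]
        _ = s * C i := mul_one _
  rw [growthRate, ← hx, mul_div_assoc', ← neg_div]
  gcongr

lemma dotProduct_mulVec_slowIntegral_sub_le (h : IsSlowDLN M r k C L u) (hM : M.PosDef)
    (hC : ∀ i, 0 < C i) (hL : 0 < L) (hZ : ∀ i j, i ≠ j → M i j ≤ 0)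
    (h0 : ∀ i, (M *ᵥ u 0) i < r i) (hr : 0 ≤ r) (hk : 0 ≤ k) (hs : 0 < s) {a : ι → ℝ}
    (ha : IsLCPSolution M (s • r - k) a) :
    (slowIntegral M r k C L u s - a) ⬝ᵥ (M *ᵥ (slowIntegral M r k C L u s - a)) ≤
      s * (∑ i, ((M⁻¹ *ᵥ r) i * ((M⁻¹ *ᵥ r) i / C i) + C i)) / L := by
  set A := slowIntegral M r k C L u s with hA
  set ρ := M⁻¹ *ᵥ r
  have hA0 : 0 ≤ A := fun i => (h.slowIntegral_mem_Icc hM hC hL hZ h0 hs i).1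
  have hρ0 : 0 ≤ ρ := le_inv_mulVec_of_mulVec_le hM hZ (by rwa [mulVec_zero])
  have haρ : a ≤ s • ρ := ha.le_of_feasible hM hZ (smul_nonneg hs.le hρ0) <| by
    rw [mulVec_smul, mulVec_inv_mulVec hM.isUnit]
    exact sub_le_self _ hk
  have hresidual : s • r - k - M *ᵥ A = growthRate C L u s := by
    rw [hA, slowIntegral, mulVec_inv_mulVec hM.isUnit, sub_sub_cancel]
  refine (ha.dotProduct_mulVec_sub_le hA0).trans ?_
  rw [hresidual, Finset.mul_sum, Finset.sum_div]
  refine Finset.sum_le_sum fun i _ => ?_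
  have hlimit : a i * growthRate C L u s i ≤ s * ρ i * (ρ i / C i / L) := by
    have hbound : 0 ≤ ρ i / C i / L := div_nonneg (div_nonneg (hρ0 i) (hC i).le) hL.le
    calc a i * growthRate C L u s i ≤ a i * (ρ i / C i / L) :=
          mul_le_mul_of_nonneg_left (h.growthRate_le hM hC hL hZ h0 hs.le i) (ha.nonneg i)
      _ ≤ s * ρ i * (ρ i / C i / L) := mul_le_mul_of_nonneg_right (haρ i) hbound
  have hintegral := h.neg_slowIntegral_mul_growthRate_le hM hC hL hZ h0 hs i
  calc (a i - A i) * growthRate C L u s i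
      = a i * growthRate C L u s i + -(A i * growthRate C L u s i) := by ring
    _ ≤ s * ρ i * (ρ i / C i / L) + s * C i / L := add_le_add hlimit hintegral
    _ = s * (ρ i * (ρ i / C i) + C i) / L := by ring

end IsSlowDLN

/-! ### Convergence to the regularization path -/

section Limit

lemma tendsto_log_one_div_nhdsGT_zero :
    Tendsto (fun ε : ℝ => Real.log (1 / ε)) (𝓝[>] 0) atTop := by
  simp only [one_div, Real.log_inv]
  exact tendsto_neg_atBot_atTop.comp Real.tendsto_log_nhdsGT_zero

lemma eventually_mulVec_mul_exp_neg_lt {ι : Type*} [Fintype ι] (M : Matrix ι ι ℝ) {r k C : ι → ℝ}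
    (hr : ∀ i, 0 < r i) (hk : ∀ i, 0 < k i) :
    ∀ᶠ L in atTop, ∀ i, (M *ᵥ fun j => C j * Real.exp (-(L * k j))) i < r i := by
  have hinit : Tendsto (fun (L : ℝ) j => C j * Real.exp (-(L * k j))) atTop (𝓝 0) :=
    tendsto_pi_nhds.mpr fun j => by
      simpa using ((Real.tendsto_exp_neg_atTop_nhds_zero.comp
        (tendsto_id.atTop_mul_const (hk j))).const_mul (C j))
  have hcont : Continuous fun v : ι → ℝ => M *ᵥ v := by fun_prop
  have hlim := (hcont.tendsto 0).comp hinit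
  rw [mulVec_zero] at hlim
  exact eventually_all.mpr fun i => (tendsto_pi_nhds.mp hlim i).eventually_lt_const (hr i)

lemma abs_sub_le_of_convexOn_of_abs_sub_affine_le {G : ℝ → ℝ} {x h g b m η : ℝ} (hh : 0 < h)
    (hconv : ConvexOn ℝ (Icc (x - h) (x + h)) G) (hG : HasDerivAt G g x)
    (hη : ∀ y ∈ Icc (x - h) (x + h), |G y - (b + m * (y - x))| ≤ η) : |g - m| ≤ 2 * η / h := by
  have hl : x - h ∈ Icc (x - h) (x + h) := ⟨le_rfl, by linarith⟩
  have hx : x ∈ Icc (x - h) (x + h) := ⟨by linarith, by linarith⟩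
  have hr : x + h ∈ Icc (x - h) (x + h) := ⟨by linarith, le_rfl⟩
  have hlower := hconv.slope_le_of_hasDerivAt hl hx (by linarith) hG
  have hupper := hconv.le_slope_of_hasDerivAt hx hr (by linarith) hG
  rw [slope_def_field, sub_sub_cancel, div_le_iff₀ hh] at hlower
  rw [slope_def_field, add_sub_cancel_left, le_div_iff₀ hh] at hupper
  have hηl := abs_le.mp (hη _ hl)
  have hηx := abs_le.mp (hη _ hx)
  have hηr := abs_le.mp (hη _ hr)
  rw [abs_le, neg_le, le_div_iff₀ hh, le_div_iff₀ hh]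
  constructor <;> linarith

variable {ι α : Type*} [Fintype ι] {M : Matrix ι ι ℝ} {r k C : ι → ℝ} {μ : ℝ → ι → ℝ}
  {l : Filter α} {L : α → ℝ} {u : α → ℝ → ι → ℝ}

lemma eventually_mulVec_zero_lt_of_isSlowDLN (hr : ∀ i, 0 < r i) (hk : ∀ i, 0 < k i)
    (hL : Tendsto L l atTop) (hu : ∀ᶠ n in l, IsSlowDLN M r k C (L n) (u n)) :
    ∀ᶠ n in l, ∀ i, (M *ᵥ u n 0) i < r i := by
  filter_upwards [hu, hL.eventually (eventually_mulVec_mul_exp_neg_lt M (C := C) hr hk)]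
    with n hn hlt
  rwa [funext hn.apply_zero]

lemma tendstoUniformlyOn_slowIntegral [DecidableEq ι] (hM : M.PosDef)
    (hZ : ∀ i j, i ≠ j → M i j ≤ 0) (hr : ∀ i, 0 < r i) (hk : ∀ i, 0 < k i) (hC : ∀ i, 0 < C i)
    (hμ : ∀ s > 0, IsLCPSolution M (r - s⁻¹ • k) (μ s)) (hL : Tendsto L l atTop)
    (hu : ∀ᶠ n in l, IsSlowDLN M r k C (L n) (u n)) (S : ℝ) :
    TendstoUniformlyOn (fun n => slowIntegral M r k C (L n) (u n)) (fun s => s • μ s) l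
      (Ioc 0 S) := by
  obtain ⟨c, hc, hcoercive⟩ := exists_pos_mul_sq_norm_le_dotProduct_mulVec hM
  set K := ∑ i, ((M⁻¹ *ᵥ r) i * ((M⁻¹ *ᵥ r) i / C i) + C i)
  refine Metric.tendstoUniformlyOn_iff.mpr fun η hη => ?_
  have hsmall : ∀ᶠ n in l, S * |K| / L n < c * η ^ 2 :=
    (hL.const_div_atTop _).eventually_lt_const (by positivity)
  filter_upwards [hu, hL.eventually_gt_atTop 0, hsmall,
    eventually_mulVec_zero_lt_of_isSlowDLN hr hk hL hu] with n hn hLn hsmalln h0 s hs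
  rw [dist_comm, dist_eq_norm]
  refine lt_of_pow_lt_pow_left₀ 2 hη.le (lt_of_mul_lt_mul_left ?_ hc.le)
  calc c * ‖slowIntegral M r k C (L n) (u n) s - s • μ s‖ ^ 2 ≤ _ := hcoercive _
    _ ≤ s * K / L n := hn.dotProduct_mulVec_slowIntegral_sub_le hM hC hLn hZ h0
        (fun i => (hr i).le) (fun i => (hk i).le) hs.1 ((hμ s hs.1).smul_of_sub_inv_smul hs.1)
    _ ≤ s * |K| / L n := by
        gcongr
        exacts [hs.1.le, le_abs_self K]
    _ ≤ S * |K| / L n := by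
        gcongr
        exact hs.2
    _ < c * η ^ 2 := hsmalln

lemma isUpperSet_setOf_pos (hM : M.PosDef) (hZ : ∀ i j, i ≠ j → M i j ≤ 0) (hk : 0 ≤ k)
    (hμ : ∀ s > 0, IsLCPSolution M (r - s⁻¹ • k) (μ s)) (i : ι) :
    IsUpperSet {s | 0 < s ∧ 0 < μ s i} := fun s t hst hs => by
  have ht := hs.1.trans_le hst
  -- `r - k / s` increases with `s`, so `μ t` is feasible at time `s`, where `μ s` is least.
  have hq : r - s⁻¹ • k ≤ M *ᵥ μ t :=
    (sub_le_sub_left (smul_le_smul_of_nonneg_right (inv_anti₀ hs.1 hst) hk) r).trans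
      (hμ t ht).le_mulVec
  exact ⟨ht, hs.2.trans_le ((hμ s hs.1).le_of_feasible hM hZ (hμ t ht).nonneg hq i)⟩

end Limit

section ThetaStar

variable {d : ℕ} {M : Matrix (Fin d) (Fin d) ℝ} {r k C : Fin d → ℝ} {I : Finset (Fin d)}

lemma thetaStar_of_notMem {i : Fin d} (hi : i ∉ I) : thetaStar M r I i = 0 :=
  dif_neg hi

lemma mulVec_thetaStar_of_mem (hM : M.PosDef) {i : Fin d} (hi : i ∈ I) :
    (M *ᵥ thetaStar M r I) i = r i := by
  have hMI : (subMat M I).PosDef := hM.submatrix Subtype.val_injective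
  calc (M *ᵥ thetaStar M r I) i = ∑ j ∈ I, M i j * thetaStar M r I j :=
        (Finset.sum_subset I.subset_univ fun j _ hj => by
          rw [thetaStar_of_notMem hj, mul_zero]).symm
    _ = (subMat M I *ᵥ ((subMat M I)⁻¹ *ᵥ subVec r I)) ⟨i, hi⟩ := by
        rw [← Finset.sum_coe_sort]
        exact Finset.sum_congr rfl fun j _ => by rw [thetaStar, dif_pos j.2]; rfl
    _ = r i := by rw [mulVec_inv_mulVec hMI.isUnit, subVec]

lemma IsLCPSolution.eq_add_smul_thetaStar (hM : M.PosDef) {s t : ℝ} {a b : Fin d → ℝ}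
    (ha : IsLCPSolution M (s • r - k) a) (hb : IsLCPSolution M (t • r - k) b)
    (haI : ∀ i, 0 < a i ↔ i ∈ I) (hbI : ∀ i, 0 < b i ↔ i ∈ I) :
    b = a + (t - s) • thetaStar M r I := by
  refine sub_eq_zero.mp <| eq_zero_of_dotProduct_mulVec_nonpos hM <|
    (Finset.sum_eq_zero fun i _ => ?_).le
  by_cases hi : i ∈ I
  · simp only [mulVec_sub, mulVec_add, mulVec_smul, Pi.sub_apply, Pi.add_apply, Pi.smul_apply,
      smul_eq_mul, hb.mulVec_eq_of_pos ((hbI i).mpr hi), ha.mulVec_eq_of_pos ((haI i).mpr hi),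
      mulVec_thetaStar_of_mem hM hi]
    ring
  · have hai : a i = 0 := le_antisymm (not_lt.mp (mt (haI i).mp hi)) (ha.nonneg i)
    have hbi : b i = 0 := le_antisymm (not_lt.mp (mt (hbI i).mp hi)) (hb.nonneg i)
    simp [hai, hbi, thetaStar_of_notMem hi]

variable {μ : ℝ → Fin d → ℝ} {α : Type*} {l : Filter α} {L : α → ℝ} {u : α → ℝ → Fin d → ℝ}

lemma norm_sub_thetaStar_le_of_norm_slowIntegral_sub_le (hM : M.PosDef)
    (hZ : ∀ i j, i ≠ j → M i j ≤ 0) (hC : ∀ i, 0 < C i)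
    (hμ : ∀ s > 0, IsLCPSolution M (r - s⁻¹ • k) (μ s)) {Λ : ℝ} {w : ℝ → Fin d → ℝ}
    (hw : IsSlowDLN M r k C Λ w) (hΛ : 0 < Λ) (h0 : ∀ i, (M *ᵥ w 0) i < r i) {s h η : ℝ}
    (hh : 0 < h) (hI : ∀ t ∈ Icc (s - h) (s + h), 0 < t ∧ ∀ i, 0 < μ t i ↔ i ∈ I)
    (hint : ∀ t ∈ Icc (s - h) (s + h), ‖slowIntegral M r k C Λ w t - t • μ t‖ ≤ η) :
    ‖w s - thetaStar M r I‖ ≤ 2 * η / h := by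
  have hsupp : ∀ t ∈ Icc (s - h) (s + h), ∀ i, 0 < (t • μ t) i ↔ i ∈ I := fun t ht i => by
    rw [Pi.smul_apply, smul_eq_mul, mul_pos_iff_of_pos_left (hI t ht).1, (hI t ht).2]
  have hscaled : ∀ t ∈ Icc (s - h) (s + h), IsLCPSolution M (t • r - k) (t • μ t) :=
    fun t ht => (hμ t (hI t ht).1).smul_of_sub_inv_smul (hI t ht).1
  have hs : s ∈ Icc (s - h) (s + h) := ⟨by linarith, by linarith⟩
  have hη : 0 ≤ η := (norm_nonneg _).trans (hint s hs)
  refine (pi_norm_le_iff_of_nonneg (by positivity)).mpr fun i => ?_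
  have hconv : ConvexOn ℝ (Icc (s - h) (s + h)) fun t => slowIntegral M r k C Λ w t i :=
    (hw.convexOn_slowIntegral hM hC hΛ hZ h0 i).subset (fun t ht => (hI t ht).1.le)
      (convex_Icc _ _)
  refine abs_sub_le_of_convexOn_of_abs_sub_affine_le (b := s * μ s i) hh hconv
    (hw.hasDerivAt_slowIntegral hM.isUnit hC hΛ.ne' (hI s hs).1.le i) fun t ht => ?_
  have haffine : t • μ t = s • μ s + (t - s) • thetaStar M r I :=
    (hscaled s hs).eq_add_smul_thetaStar hM (hscaled t ht) (hsupp s hs) (hsupp t ht)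
  have hnorm := (norm_le_pi_norm _ i).trans (hint t ht)
  rw [haffine] at hnorm
  simpa [mul_comm] using hnorm

lemma tendstoLocallyUniformlyOn_thetaStar (hM : M.PosDef) (hZ : ∀ i j, i ≠ j → M i j ≤ 0)
    (hr : ∀ i, 0 < r i) (hk : ∀ i, 0 < k i) (hC : ∀ i, 0 < C i)
    (hμ : ∀ s > 0, IsLCPSolution M (r - s⁻¹ • k) (μ s)) (hL : Tendsto L l atTop)
    (hu : ∀ᶠ n in l, IsSlowDLN M r k C (L n) (u n)) :
    TendstoLocallyUniformlyOn u (fun s => thetaStar M r {i | 0 < μ s i}) l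
      (Ioi 0 \ switchTimes μ) := by
  refine Metric.tendstoLocallyUniformlyOn_iff.mpr fun δ hδ s₀ hs₀ => ?_
  obtain ⟨ρ, hρ, hball⟩ := Metric.eventually_nhds_iff_ball.mp <|
    eventually_pos_iff_of_notMem_switchTimes (mem_Ioi.mp hs₀.1) hs₀.2
  obtain ⟨h, hh, hhρ⟩ : ∃ h, 0 < h ∧ 2 * h < ρ := ⟨ρ / 4, by positivity, by linarith⟩
  refine ⟨Metric.ball s₀ h, mem_nhdsWithin_of_mem_nhds (Metric.ball_mem_nhds _ hh), ?_⟩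
  have hint := Metric.tendstoUniformlyOn_iff.mp
    (tendstoUniformlyOn_slowIntegral hM hZ hr hk hC hμ hL hu (s₀ + ρ)) (δ * h / 4) (by positivity)
  filter_upwards [hu, hL.eventually_gt_atTop 0, hint,
    eventually_mulVec_zero_lt_of_isSlowDLN hr hk hL hu] with n hn hLn hintn h0 s hs
  have hnear : ∀ t ∈ Icc (s - h) (s + h), t ∈ Metric.ball s₀ ρ := fun t ht => by
    rw [Real.ball_eq_Ioo] at hs ⊢
    exact ⟨by linarith [hs.1, ht.1], by linarith [hs.2, ht.2]⟩
  have hsball : s ∈ Metric.ball s₀ ρ := hnear s ⟨by linarith, by linarith⟩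
  have hclose := norm_sub_thetaStar_le_of_norm_slowIntegral_sub_le (I := {i | 0 < μ s i})
    (η := δ * h / 4) hM hZ hC hμ hn hLn h0 hh
    (fun t ht => ⟨(hball t (hnear t ht)).1, fun i => by
      simp [(hball t (hnear t ht)).2 i, (hball s hsball).2 i]⟩)
    (fun t ht => by
      rw [← dist_eq_norm, dist_comm]
      refine (hintn t ⟨(hball t (hnear t ht)).1, ?_⟩).le
      rw [Real.ball_eq_Ioo] at hnear
      exact (hnear t ht).2.le)
  rw [dist_comm, dist_eq_norm]
  calc ‖u n s - thetaStar M r {i | 0 < μ s i}‖ ≤ 2 * (δ * h / 4) / h := hclose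
    _ = δ / 2 := by field_simp; norm_num
    _ < δ := half_lt_self hδ

end ThetaStar

/-- Theorem 1, point 2: Under (A1) and (A2), the support map
`s ↦ I(s) = {i : μᵢ(s) > 0}` of the regularized minimizers has finitely many
discontinuity points (all in `(0,∞)`), and away from them
`θ^{(ε)}(s log(1/ε)) → θ_*^{(I(s))}` as `ε → 0⁺`, uniformly on compact subsets of
`(0,∞)` minus the discontinuity points. -/
theorem dln_saddle_to_saddle (n d : ℕ) (hn : 0 < n) (hd : 0 < d)
    (X : Matrix (Fin n) (Fin d) ℝ) (y : Fin n → ℝ)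
    (M : Matrix (Fin d) (Fin d) ℝ) (r : Fin d → ℝ)
    (hM : M = Xᵀ * X) (hr : r = Xᵀ *ᵥ y)
    (hA1 : ∀ i, 0 < r i)
    (hA2 : ∀ i j, i ≠ j → M i j ≤ 0)
    (C k : Fin d → ℝ) (hC : ∀ i, 0 < C i) (hk : ∀ i, 0 < k i)
    (f : (Fin d → ℝ) → ℝ)
    (hf : ∀ θ : Fin d → ℝ, f θ =
      (1 / 2) * ∑ j, (y j) ^ 2 - ∑ i, r i * θ i + (1 / 2) * ∑ i, θ i * (M *ᵥ θ) i)
    (μ : ℝ → Fin d → ℝ)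
    (hμ : ∀ s > (0 : ℝ),
      (∀ i, 0 ≤ μ s i) ∧
      ∀ θ' : Fin d → ℝ, (∀ i, 0 ≤ θ' i) →
        f (μ s) + (1 / s) * ∑ i, k i * μ s i ≤ f θ' + (1 / s) * ∑ i, k i * θ' i)
    (θ : ℝ → ℝ → Fin d → ℝ)
    (hθinit : ∀ ε ∈ Set.Ioc (0 : ℝ) 1, ∀ i, θ ε 0 i = C i * ε ^ k i)
    (hθode : ∀ ε ∈ Set.Ioc (0 : ℝ) 1, ∀ t ≥ (0 : ℝ), ∀ i,
      HasDerivAt (fun τ => θ ε τ i) (θ ε t i * (r i - (M *ᵥ θ ε t) i)) t) :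
    ∃ Sdisc : Finset ℝ,
      (∀ s ∈ Sdisc, 0 < s) ∧
      -- `s ↦ I(s)` is locally constant away from the finitely many points of `Sdisc`
      (∀ s > (0 : ℝ), s ∉ Sdisc →
        ∀ᶠ s' in nhds s, {i : Fin d | 0 < μ s' i} = {i : Fin d | 0 < μ s i}) ∧
      -- pointwise convergence to the fixed point `θ_*^{(I(s))}`
      (∀ s > (0 : ℝ), s ∉ Sdisc →
        Filter.Tendsto (fun ε => θ ε (s * Real.log (1 / ε)))
          (nhdsWithin 0 (Set.Ioi 0))
          (nhds (thetaStar M r (Finset.univ.filter (fun i => 0 < μ s i))))) ∧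
      -- uniform convergence on compact subsets of `(0,∞) \ Sdisc`
      (∀ K : Set ℝ, IsCompact K → K ⊆ Set.Ioi 0 \ ↑Sdisc →
        TendstoUniformlyOn (fun ε s => θ ε (s * Real.log (1 / ε)))
          (fun s => thetaStar M r (Finset.univ.filter (fun i => 0 < μ s i)))
          (nhdsWithin 0 (Set.Ioi 0)) K) := by
  subst hM hr
  have hPD : (Xᵀ * X).PosDef := posDef_transpose_mul_self_of_offDiag_nonpos hA1 hA2
  have hLCP : ∀ s > 0, IsLCPSolution (Xᵀ * X) (Xᵀ *ᵥ y - s⁻¹ • k) (μ s) := fun s hs =>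
    .of_forall_regularized_le (isHermitian_iff_isSymm.mp hPD.isHermitian) hf (hμ s hs).1 (hμ s hs).2
  have hDLN : ∀ᶠ ε in 𝓝[>] 0, IsSlowDLN (Xᵀ * X) (Xᵀ *ᵥ y) k C (Real.log (1 / ε))
      fun s => θ ε (s * Real.log (1 / ε)) := by
    filter_upwards [Ioc_mem_nhdsGT zero_lt_one] with ε hε
    exact IsSlowDLN.of_hasDerivAt hε (hθinit ε hε) (hθode ε hε)
  have hfin : (switchTimes μ).Finite :=
    finite_switchTimes (isUpperSet_setOf_pos hPD hA2 (fun i => (hk i).le) hLCP)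
  have hunif : ∀ K, IsCompact K → K ⊆ Ioi 0 \ switchTimes μ →
      TendstoUniformlyOn (fun ε s => θ ε (s * Real.log (1 / ε)))
        (fun s => thetaStar (Xᵀ * X) (Xᵀ *ᵥ y) {i | 0 < μ s i}) (𝓝[>] 0) K := fun K hK hsub =>
    (tendstoLocallyUniformlyOn_iff_tendstoUniformlyOn_of_compact hK).mp <|
      (tendstoLocallyUniformlyOn_thetaStar hPD hA2 hA1 hk hC hLCP
        tendsto_log_one_div_nhdsGT_zero hDLN).mono hsub
  refine ⟨hfin.toFinset, fun s hs => (hfin.mem_toFinset.mp hs).1, fun s hs hsμ => ?_,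
    fun s hs hsμ => ?_, by simpa only [hfin.coe_toFinset] using hunif⟩ <;>
    rw [hfin.mem_toFinset] at hsμ
  · filter_upwards [eventually_pos_iff_of_notMem_switchTimes hs hsμ] with t ht
    exact Set.ext ht.2
  · exact (hunif {s} isCompact_singleton (singleton_subset_iff.mpr ⟨hs, hsμ⟩)).tendsto_at rfl
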